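/- arXiv:2406.18802 — 2 statements merged into one kernel-verified Lean document; each statement's English description precedes it below -/
import Mathlib

section
/- (Corollary 1.) Assume (x,ω) ↦ φ(x,ω)² is integrable with respect to 𝒳₁ ⊗ Ω and with respect to 𝒳₂ ⊗ Ω, and that (x₁,x₂) ↦ K(x₁,x₂)² is (𝒳₁ ⊗ 𝒳₂)-integrable. Then the optimal variance satisfies the bound 𝒱̂ = ( ∫_W q_φ(ω) dΩ(ω) )² − ∫∫ K(x₁,x₂)² d𝒳₂(x₂) d𝒳₁(x₁) ≤ ∫∫ [ K(x₁,x₁) K(x₂,x₂) − K(x₁,x₂)² ] d𝒳₂(x₂) d𝒳₁(x₁). -/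
open MeasureTheory ENNReal NNReal

/-!
By Fubini, `∫∫ K(x₁,x₁) K(x₂,x₂)` is the product of the `Ω`-integrals of the two second moments
`ω ↦ ∫ φ(x,ω)² d𝒳ᵢ(x)`, whereas `∫ q_φ dΩ` integrates the geometric mean of these moments. The
bound is thus Cauchy–Schwarz in `L²(Ω)`. A second, pointwise use of Cauchy–Schwarz,
`K(x₁,x₂)² ≤ K(x₁,x₁) K(x₂,x₂)`, makes `K²` integrable, so that the same term can be split off on
both sides.
-/

section CauchySchwarz

variable {α : Type*} [MeasurableSpace α] {μ : Measure α} {f g : α → ℝ}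

theorem sq_integral_mul_le (hf : MemLp f 2 μ) (hg : MemLp g 2 μ) :
    (∫ a, f a * g a ∂μ) ^ 2 ≤ (∫ a, f a ^ 2 ∂μ) * ∫ a, g a ^ 2 ∂μ := by
  have inner_toLp {u v : α → ℝ} (hu : MemLp u 2 μ) (hv : MemLp v 2 μ) :
      inner ℝ (hu.toLp u) (hv.toLp v) = ∫ a, u a * v a ∂μ := by
    rw [L2.inner_def]
    refine integral_congr_ae ?_
    filter_upwards [hu.coeFn_toLp, hv.coeFn_toLp] with a hua hva
    rw [hua, hva, Real.inner_apply]
  simpa only [inner_toLp, ← sq, real_inner_comm] using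
    real_inner_mul_inner_self_le (hf.toLp f) (hg.toLp g)

theorem memLp_two_sqrt (hf : Integrable f μ) : MemLp (fun a => √(f a)) 2 μ := by
  rw [memLp_two_iff_integrable_sq (Real.continuous_sqrt.comp_aestronglyMeasurable hf.1)]
  simpa only [Real.sq_sqrt'] using hf.pos_part

theorem sq_integral_sqrt_mul_le (hf : Integrable f μ) (hg : Integrable g μ)
    (hf₀ : 0 ≤ᵐ[μ] f) (hg₀ : 0 ≤ᵐ[μ] g) :
    (∫ a, √(f a * g a) ∂μ) ^ 2 ≤ (∫ a, f a ∂μ) * ∫ a, g a ∂μ := by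
  have sq_sqrt {u : α → ℝ} (hu : 0 ≤ᵐ[μ] u) : ∫ a, √(u a) ^ 2 ∂μ = ∫ a, u a ∂μ :=
    integral_congr_ae (hu.mono fun _ => Real.sq_sqrt)
  calc (∫ a, √(f a * g a) ∂μ) ^ 2
    _ = (∫ a, √(f a) * √(g a) ∂μ) ^ 2 := by
        rw [integral_congr_ae (hf₀.mono fun a ha => Real.sqrt_mul ha (g a))]
    _ ≤ (∫ a, √(f a) ^ 2 ∂μ) * ∫ a, √(g a) ^ 2 ∂μ :=
        sq_integral_mul_le (memLp_two_sqrt hf) (memLp_two_sqrt hg)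
    _ = (∫ a, f a ∂μ) * ∫ a, g a ∂μ := by rw [sq_sqrt hf₀, sq_sqrt hg₀]

end CauchySchwarz

theorem ae_memLp_prodMk_left {α β E : Type*} [MeasurableSpace α] [MeasurableSpace β]
    [NormedAddCommGroup E] {μ : Measure α} {ν : Measure β} [SFinite ν] {p : ℝ≥0∞}
    {f : α × β → E} (hp₀ : p ≠ 0) (hp : p ≠ ∞) (hf : MemLp f p (μ.prod ν)) :
    ∀ᵐ a ∂μ, MemLp (fun b => f (a, b)) p ν := by
  have h_int := (integrable_norm_rpow_iff hf.1 hp₀ hp).2 hf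
  filter_upwards [hf.1.prodMk_left, ((integrable_prod_iff h_int.1).1 h_int).1] with a h_meas h_int_a
  exact (integrable_norm_rpow_iff h_meas hp₀ hp).1 h_int_a

/-- The kernel `(x, y) ↦ ⟪φ x, ψ y⟫` in `L²(ρ)` of two families of features `φ` and `ψ`. For
`φ = ψ` and `ρ = Ω` it is the kernel `K` of the paper; two families are allowed since the two
arguments of `K` are integrated against different measures. -/
noncomputable def featureKernel {X Y W : Type*} [MeasurableSpace W] (ρ : Measure W)
    (φ : X → W → ℝ) (ψ : Y → W → ℝ) (x : X) (y : Y) : ℝ :=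
  ∫ ω, φ x ω * ψ y ω ∂ρ

namespace featureKernel

variable {X Y W : Type*} [MeasurableSpace W] {ρ : Measure W} {φ : X → W → ℝ} {ψ : Y → W → ℝ}

theorem self_eq_integral_sq (x : X) : featureKernel ρ φ φ x x = ∫ ω, φ x ω ^ 2 ∂ρ := by
  simp only [featureKernel, sq]

theorem sq_le_mul_self {x : X} {y : Y} (hx : MemLp (φ x) 2 ρ) (hy : MemLp (ψ y) 2 ρ) :
    featureKernel ρ φ ψ x y ^ 2 ≤ featureKernel ρ φ φ x x * featureKernel ρ ψ ψ y y := by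
  simp only [self_eq_integral_sq]
  exact sq_integral_mul_le hx hy

variable [MeasurableSpace X] [MeasurableSpace Y] {μ : Measure X} {ν : Measure Y}
  [SFinite ρ]

theorem integrable_self (hφ : MemLp (Function.uncurry φ) 2 (μ.prod ρ)) :
    Integrable (fun x => featureKernel ρ φ φ x x) μ := by
  simp only [self_eq_integral_sq]
  exact hφ.integrable_sq.integral_prod_left

variable [SFinite μ]

theorem integral_self (hφ : MemLp (Function.uncurry φ) 2 (μ.prod ρ)) :
    ∫ x, featureKernel ρ φ φ x x ∂μ = ∫ ω, ∫ x, φ x ω ^ 2 ∂μ ∂ρ := by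
  simp only [self_eq_integral_sq]
  exact integral_integral_swap hφ.integrable_sq

variable [SFinite ν]

theorem aestronglyMeasurable (hφ : AEStronglyMeasurable (Function.uncurry φ) (μ.prod ρ))
    (hψ : AEStronglyMeasurable (Function.uncurry ψ) (ν.prod ρ)) :
    AEStronglyMeasurable (Function.uncurry (featureKernel ρ φ ψ)) (μ.prod ν) := by
  have hφ' : AEStronglyMeasurable (fun q : (X × Y) × W => φ q.1.1 q.2) ((μ.prod ν).prod ρ) :=
    hφ.comp_quasiMeasurePreserving <|
      QuasiMeasurePreserving.prodMap Measure.quasiMeasurePreserving_fst (.id ρ)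
  have hψ' : AEStronglyMeasurable (fun q : (X × Y) × W => ψ q.1.2 q.2) ((μ.prod ν).prod ρ) :=
    hψ.comp_quasiMeasurePreserving <|
      QuasiMeasurePreserving.prodMap Measure.quasiMeasurePreserving_snd (.id ρ)
  exact (hφ'.mul hψ').integral_prod_right'

theorem integrable_sq (hφ : MemLp (Function.uncurry φ) 2 (μ.prod ρ))
    (hψ : MemLp (Function.uncurry ψ) 2 (ν.prod ρ)) :
    Integrable (fun p : X × Y => featureKernel ρ φ ψ p.1 p.2 ^ 2) (μ.prod ν) := by
  refine ((integrable_self hφ).mul_prod (integrable_self hψ)).mono'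
    ((aestronglyMeasurable hφ.1 hψ.1).pow 2) ?_
  have h_ae_φ : ∀ᵐ x ∂μ, MemLp (φ x) 2 ρ := ae_memLp_prodMk_left two_ne_zero ofNat_ne_top hφ
  have h_ae_ψ : ∀ᵐ y ∂ν, MemLp (ψ y) 2 ρ := ae_memLp_prodMk_left two_ne_zero ofNat_ne_top hψ
  filter_upwards [Measure.quasiMeasurePreserving_fst.ae h_ae_φ,
    Measure.quasiMeasurePreserving_snd.ae h_ae_ψ] with p hp₁ hp₂
  rw [Real.norm_of_nonneg (sq_nonneg _)]
  exact sq_le_mul_self hp₁ hp₂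

theorem integral_integral_mul_self_sub_sq (hφ : MemLp (Function.uncurry φ) 2 (μ.prod ρ))
    (hψ : MemLp (Function.uncurry ψ) 2 (ν.prod ρ)) :
    ∫ x, ∫ y, (featureKernel ρ φ φ x x * featureKernel ρ ψ ψ y y
        - featureKernel ρ φ ψ x y ^ 2) ∂ν ∂μ
      = (∫ x, featureKernel ρ φ φ x x ∂μ) * (∫ y, featureKernel ρ ψ ψ y y ∂ν)
        - ∫ x, ∫ y, featureKernel ρ φ ψ x y ^ 2 ∂ν ∂μ := by
  rw [integral_integral_sub ((integrable_self hφ).mul_prod (integrable_self hψ))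
    (integrable_sq hφ hψ)]
  simp only [integral_const_mul, integral_mul_const]

end featureKernel

theorem optimal_variance_upper_bound_general {X Y W : Type*}
    [MeasurableSpace X] [MeasurableSpace Y] [MeasurableSpace W]
    {μ : Measure X} {ν : Measure Y} {ρ : Measure W} [SFinite μ] [SFinite ν] [SFinite ρ]
    {φ : X → W → ℝ} {ψ : Y → W → ℝ}
    (hφ : MemLp (Function.uncurry φ) 2 (μ.prod ρ))
    (hψ : MemLp (Function.uncurry ψ) 2 (ν.prod ρ)) :
    (∫ ω, √((∫ x, φ x ω ^ 2 ∂μ) * (∫ y, ψ y ω ^ 2 ∂ν)) ∂ρ) ^ 2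
        - (∫ x, ∫ y, featureKernel ρ φ ψ x y ^ 2 ∂ν ∂μ)
      ≤ ∫ x, ∫ y, (featureKernel ρ φ φ x x * featureKernel ρ ψ ψ y y
          - featureKernel ρ φ ψ x y ^ 2) ∂ν ∂μ := by
  rw [featureKernel.integral_integral_mul_self_sub_sq hφ hψ, featureKernel.integral_self hφ,
    featureKernel.integral_self hψ]
  refine sub_le_sub_right (sq_integral_sqrt_mul_le hφ.integrable_sq.integral_prod_right
    hψ.integrable_sq.integral_prod_right ?_ ?_) _
  all_goals exact .of_forall fun ω => integral_nonneg fun _ => sq_nonneg _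

/-- **Corollary 1.**  The optimal variance
`𝒱̂ = (∫ qφ dΩ)² − ∫∫ K(x₁,x₂)² d𝒳₂ d𝒳₁` is bounded above by
`∫∫ [K(x₁,x₁) K(x₂,x₂) − K(x₁,x₂)²] d𝒳₂ d𝒳₁`. -/
theorem optimal_variance_upper_bound
    {W X : Type*} [MeasurableSpace W] [MeasurableSpace X]
    (μ : Measure W) [SigmaFinite μ]
    (pΩ : W → ℝ≥0) (hpΩ : Measurable pΩ)
    (hpΩ1 : ∫⁻ ω, (pΩ ω : ℝ≥0∞) ∂μ = 1)
    (Ω : Measure W) (hΩ : Ω = μ.withDensity fun ω => (pΩ ω : ℝ≥0∞))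
    (𝒳₁ 𝒳₂ : Measure X) [IsProbabilityMeasure 𝒳₁] [IsProbabilityMeasure 𝒳₂]
    (φ : X → W → ℝ) (hφ : Measurable (Function.uncurry φ))
    (K : X → X → ℝ)
    (hK : ∀ x₁ x₂ : X, K x₁ x₂ = ∫ ω, φ x₁ ω * φ x₂ ω ∂Ω)
    (qφ : W → ℝ)
    (hq : ∀ ω, qφ ω =
      Real.sqrt ((∫ x, φ x ω ^ 2 ∂𝒳₁) * (∫ x, φ x ω ^ 2 ∂𝒳₂)))
    (hsq₁ : Integrable (fun p : X × W => φ p.1 p.2 ^ 2) (𝒳₁.prod Ω))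
    (hsq₂ : Integrable (fun p : X × W => φ p.1 p.2 ^ 2) (𝒳₂.prod Ω))
    (hK2int : Integrable (fun p : X × X => K p.1 p.2 ^ 2) (𝒳₁.prod 𝒳₂)) :
    (∫ ω, qφ ω ∂Ω) ^ 2 - (∫ x₁, ∫ x₂, K x₁ x₂ ^ 2 ∂𝒳₂ ∂𝒳₁)
      ≤ ∫ x₁, ∫ x₂, (K x₁ x₁ * K x₂ x₂ - K x₁ x₂ ^ 2) ∂𝒳₂ ∂𝒳₁ := by
  have : SFinite Ω := hΩ ▸ inferInstance
  obtain rfl : K = featureKernel Ω φ φ := funext₂ hK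
  simpa only [hq] using optimal_variance_upper_bound_general
    ((memLp_two_iff_integrable_sq hφ.aestronglyMeasurable).2 hsq₁)
    ((memLp_two_iff_integrable_sq hφ.aestronglyMeasurable).2 hsq₂)
end

section
/- (Representation independence.) Let Ω and Ω' be probability measures on measurable spaces W and W', and φ : X → W → ℝ, φ' : X → W' → ℝ be two random features representations of the same kernel K, i.e., K(x₁,x₂) = ∫ φ(x₁,ω) φ(x₂,ω) dΩ(ω) = ∫ φ'(x₁,ω') φ'(x₂,ω') dΩ'(ω') for all x₁, x₂. Suppose 𝒳₁ = 𝒳₂ = 𝒳 and the relevant square-integrability conditions hold for both representations ((x,ω) ↦ φ(x,ω)² integrable w.r.t. 𝒳 ⊗ Ω, (x,ω') ↦ φ'(x,ω')² integrable w.r.t. 𝒳 ⊗ Ω', and (x₁,x₂) ↦ K(x₁,x₂)² integrable w.r.t. 𝒳 ⊗ 𝒳). Then the optimal variances of the two representations are equal: ( ∫ q_φ dΩ )² − ∫∫ K² d𝒳 d𝒳 = ( ∫ q_{φ'} dΩ' )² − ∫∫ K² d𝒳 d𝒳. -/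
open MeasureTheory ENNReal NNReal

/-! With a single input distribution `𝒳` the square root in `q_φ` disappears, and Fubini turns
`∫ q_φ dΩ` into `∫ K(x, x) d𝒳(x)`, the trace of the kernel, which depends on `K` alone. -/

section OptimalWeight

variable {W W' X : Type*} [MeasurableSpace X]

/-- The function `q_φ` for input distribution `𝒳`. Up to normalization it is the density with
respect to `Ω` from which features should be sampled to minimize the variance of the kernel
estimator. The two equal factors belong to the two arguments of the kernel. -/
noncomputable def optimalWeight (𝒳 : Measure X) (φ : X → W → ℝ) (ω : W) : ℝ :=
  √((∫ x, φ x ω ^ 2 ∂𝒳) * (∫ x, φ x ω ^ 2 ∂𝒳))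

theorem optimalWeight_eq_integral_sq (𝒳 : Measure X) (φ : X → W → ℝ) (ω : W) :
    optimalWeight 𝒳 φ ω = ∫ x, φ x ω ^ 2 ∂𝒳 :=
  Real.sqrt_mul_self (integral_nonneg fun _ => sq_nonneg _)

variable [MeasurableSpace W] [MeasurableSpace W']

theorem integral_optimalWeight (Ω : Measure W) [SFinite Ω] (𝒳 : Measure X) [SFinite 𝒳]
    (φ : X → W → ℝ) (hsq : Integrable (fun p : X × W => φ p.1 p.2 ^ 2) (𝒳.prod Ω)) :
    ∫ ω, optimalWeight 𝒳 φ ω ∂Ω = ∫ x, ∫ ω, φ x ω ^ 2 ∂Ω ∂𝒳 := by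
  simp only [optimalWeight_eq_integral_sq]
  exact (integral_integral_swap hsq).symm

theorem representation_independence_general
    (Ω : Measure W) [SFinite Ω] (Ω' : Measure W') [SFinite Ω'] (𝒳 : Measure X) [SFinite 𝒳]
    (φ : X → W → ℝ) (φ' : X → W' → ℝ)
    (hsq : Integrable (fun p : X × W => φ p.1 p.2 ^ 2) (𝒳.prod Ω))
    (hsq' : Integrable (fun p : X × W' => φ' p.1 p.2 ^ 2) (𝒳.prod Ω'))
    (hdiag : ∀ᵐ x ∂𝒳, ∫ ω, φ x ω ^ 2 ∂Ω = ∫ ω', φ' x ω' ^ 2 ∂Ω') :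
    ∫ ω, optimalWeight 𝒳 φ ω ∂Ω = ∫ ω', optimalWeight 𝒳 φ' ω' ∂Ω' := by
  rw [integral_optimalWeight Ω 𝒳 φ hsq, integral_optimalWeight Ω' 𝒳 φ' hsq']
  exact integral_congr_ae hdiag

end OptimalWeight

/-- **Representation independence.**  If `(φ, Ω)` and `(φ', Ω')` are two random-features
representations of the same kernel `K`, and `𝒳₁ = 𝒳₂ = 𝒳`, then (under the relevant
square-integrability conditions) the optimal variances of the two representations coincide:
`(∫ qφ dΩ)² − ∫∫ K² d𝒳 d𝒳 = (∫ qφ' dΩ')² − ∫∫ K² d𝒳 d𝒳`. -/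
theorem representation_independence
    {W W' X : Type*} [MeasurableSpace W] [MeasurableSpace W'] [MeasurableSpace X]
    (Ω : Measure W) [IsProbabilityMeasure Ω]
    (Ω' : Measure W') [IsProbabilityMeasure Ω']
    (𝒳 : Measure X) [IsProbabilityMeasure 𝒳]
    (φ : X → W → ℝ) (hφ : Measurable (Function.uncurry φ))
    (φ' : X → W' → ℝ) (hφ' : Measurable (Function.uncurry φ'))
    (K : X → X → ℝ)
    (hK : ∀ x₁ x₂ : X, K x₁ x₂ = ∫ ω, φ x₁ ω * φ x₂ ω ∂Ω)
    (hK' : ∀ x₁ x₂ : X, K x₁ x₂ = ∫ ω', φ' x₁ ω' * φ' x₂ ω' ∂Ω')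
    (qφ : W → ℝ)
    (hq : ∀ ω, qφ ω =
      Real.sqrt ((∫ x, φ x ω ^ 2 ∂𝒳) * (∫ x, φ x ω ^ 2 ∂𝒳)))
    (qφ' : W' → ℝ)
    (hq' : ∀ ω', qφ' ω' =
      Real.sqrt ((∫ x, φ' x ω' ^ 2 ∂𝒳) * (∫ x, φ' x ω' ^ 2 ∂𝒳)))
    (hsq : Integrable (fun p : X × W => φ p.1 p.2 ^ 2) (𝒳.prod Ω))
    (hsq' : Integrable (fun p : X × W' => φ' p.1 p.2 ^ 2) (𝒳.prod Ω'))
    (hK2int : Integrable (fun p : X × X => K p.1 p.2 ^ 2) (𝒳.prod 𝒳)) :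
    (∫ ω, qφ ω ∂Ω) ^ 2 - (∫ x₁, ∫ x₂, K x₁ x₂ ^ 2 ∂𝒳 ∂𝒳)
      = (∫ ω', qφ' ω' ∂Ω') ^ 2 - (∫ x₁, ∫ x₂, K x₁ x₂ ^ 2 ∂𝒳 ∂𝒳) := by
  have hdiag (x : X) : ∫ ω, φ x ω ^ 2 ∂Ω = ∫ ω', φ' x ω' ^ 2 ∂Ω' := by
    simpa only [sq] using (hK x x).symm.trans (hK' x x)
  rw [show qφ = optimalWeight 𝒳 φ from funext hq, show qφ' = optimalWeight 𝒳 φ' from funext hq',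
    representation_independence_general Ω Ω' 𝒳 φ φ' hsq hsq' (ae_of_all 𝒳 hdiag)]
end
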